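/- arXiv:math/0304028 — 6 statements merged into one kernel-verified Lean document; each statement's English description precedes it below -/
import Mathlib

section
/- Let $n \geq 1$ and $k \geq 2$ be natural numbers with $k - 1/2 < n$, let $\pi^k_n = \prod_{i=1}^{k-1}(1 - i/n)$ be the probability that $k$ uniformly random samples from a space of size $n$ are all distinct, and let $\mathfrak{p}(k-1,m) = \sum_{i=1}^{k-1} i^m$. Then for every natural number $N \geq 2$, setting $\epsilon^k_n(N) = \frac{(k-\frac12)^{N+1}}{N(N+1)\left(1-\frac{k-1/2}{n}\right)n^N}$, one has $\sum_{m=1}^{N-1} \frac{\mathfrak{p}(k-1,m)}{m n^m} < -\ln(\pi^k_n) < \sum_{m=1}^{N-1} \frac{\mathfrak{p}(k-1,m)}{m n^m} + \epsilon^k_n(N)$. -/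
/-!
Summing the Mercator series `-log (1 - x) = ∑ x ^ m / m` over `x = i / n` turns its partial sums
into power sums, and a geometric series bounds the tail from degree `N` on by
`x ^ N / (N * (1 - x))`. By convexity (the midpoint half of the Hermite–Hadamard inequality),
`i ^ N` is at most the integral of `y ^ N` over `[i - 1/2, i + 1/2]`. These intervals tile
`[1/2, k - 1/2]`, so `∑ i ^ N` is less than `(k - 1/2) ^ (N + 1) / (N + 1)`; this is where the
half-integer comes from.
-/

open Finset

section MidpointConvexity

variable {R : Type*} [CommRing R] [LinearOrder R] [IsStrictOrderedRing R] {a h : R}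

lemma sub_pow_le_add_pow (ha : 0 ≤ a) (hh : 0 ≤ h) (m : ℕ) : (a - h) ^ m ≤ (a + h) ^ m :=
  calc (a - h) ^ m ≤ |a - h| ^ m := (le_abs_self _).trans_eq (abs_pow _ _)
    _ ≤ (a + h) ^ m := by
      gcongr
      exact abs_le.2 ⟨by linarith, by linarith⟩

lemma two_mul_pow_le_add_pow_add_sub_pow (ha : 0 ≤ a) (hh : 0 ≤ h) (m : ℕ) :
    2 * a ^ m ≤ (a + h) ^ m + (a - h) ^ m := by
  induction m with
  | zero => norm_num
  | succ m ih =>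
    have hdiff : 0 ≤ (a + h) ^ m - (a - h) ^ m := sub_nonneg.2 (sub_pow_le_add_pow ha hh m)
    calc 2 * a ^ (m + 1) = a * (2 * a ^ m) := by ring
      _ ≤ a * ((a + h) ^ m + (a - h) ^ m) := by gcongr
      _ ≤ a * ((a + h) ^ m + (a - h) ^ m) + h * ((a + h) ^ m - (a - h) ^ m) :=
        le_add_of_nonneg_right (mul_nonneg hh hdiff)
      _ = (a + h) ^ (m + 1) + (a - h) ^ (m + 1) := by ring

lemma two_mul_succ_mul_pow_le_add_pow_sub_sub_pow (ha : 0 ≤ a) (hh : 0 ≤ h) (m : ℕ) :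
    2 * h * ((m + 1) * a ^ m) ≤ (a + h) ^ (m + 1) - (a - h) ^ (m + 1) := by
  induction m with
  | zero => exact le_of_eq (by simp; ring)
  | succ m ih =>
    calc 2 * h * (((m + 1 : ℕ) + 1) * a ^ (m + 1))
        = a * (2 * h * ((m + 1) * a ^ m)) + h * (2 * a ^ (m + 1)) := by push_cast; ring
      _ ≤ a * ((a + h) ^ (m + 1) - (a - h) ^ (m + 1))
          + h * ((a + h) ^ (m + 1) + (a - h) ^ (m + 1)) := by
        gcongr
        exact two_mul_pow_le_add_pow_add_sub_pow ha hh (m + 1)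
      _ = (a + h) ^ (m + 1 + 1) - (a - h) ^ (m + 1 + 1) := by ring

end MidpointConvexity

lemma succ_mul_sum_pow_lt_sub_half_pow {R : Type*} [Field R] [LinearOrder R]
    [IsStrictOrderedRing R] (N : ℕ) {k : ℕ} (hk : 1 ≤ k) :
    ((N : R) + 1) * ∑ i ∈ Ico 1 k, (i : R) ^ N < ((k : R) - 1 / 2) ^ (N + 1) := by
  induction k, hk using Nat.le_induction with
  | base =>
    simp only [Ico_self, sum_empty, mul_zero, Nat.cast_one]
    exact pow_pos (by norm_num) _
  | succ k hk ih =>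
    have hmid : ((N : R) + 1) * (k : R) ^ N
        ≤ ((k : R) + 1 / 2) ^ (N + 1) - ((k : R) - 1 / 2) ^ (N + 1) := by
      simpa using two_mul_succ_mul_pow_le_add_pow_sub_sub_pow (k.cast_nonneg (α := R))
        (one_half_pos (α := R)).le N
    have hshift : ((k + 1 : ℕ) : R) - 1 / 2 = k + 1 / 2 := by push_cast; ring
    rw [sum_Ico_succ_top hk, mul_add, hshift]
    linarith

section MercatorSeries

variable {x : ℝ}

lemma hasSum_pow_div_neg_log_one_sub (hx : |x| < 1) :
    HasSum (fun m : ℕ ↦ x ^ m / m) (-Real.log (1 - x)) := by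
  rw [← hasSum_nat_add_iff' 1]
  simpa using Real.hasSum_pow_div_log_of_abs_lt_one hx

lemma sum_range_pow_div_eq_sum_Ico {N : ℕ} (hN : 1 ≤ N) :
    ∑ m ∈ range N, x ^ m / m = ∑ m ∈ Ico 1 N, x ^ m / m := by
  rw [range_eq_Ico, sum_eq_sum_Ico_succ_bot hN]
  simp

lemma sum_pow_div_lt_neg_log_one_sub (hx₀ : 0 < x) (hx₁ : x < 1) {N : ℕ} (hN : 1 ≤ N) :
    ∑ m ∈ Ico 1 N, x ^ m / m < -Real.log (1 - x) :=
  calc ∑ m ∈ Ico 1 N, x ^ m / m = ∑ m ∈ range N, x ^ m / m := (sum_range_pow_div_eq_sum_Ico hN).symm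
    _ < ∑ m ∈ range (N + 1), x ^ m / m := by
      rw [sum_range_succ]
      exact lt_add_of_pos_right _ (by positivity)
    _ ≤ -Real.log (1 - x) :=
      sum_le_hasSum _ (fun m _ ↦ by positivity)
        (hasSum_pow_div_neg_log_one_sub (by rwa [abs_of_pos hx₀]))

lemma neg_log_one_sub_le_sum_pow_div_add (hx₀ : 0 ≤ x) (hx₁ : x < 1) {N : ℕ} (hN : 1 ≤ N) :
    -Real.log (1 - x) ≤ ∑ m ∈ Ico 1 N, x ^ m / m + x ^ N / (N * (1 - x)) := by
  have htail := (hasSum_nat_add_iff' N).2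
    (hasSum_pow_div_neg_log_one_sub (by rwa [abs_of_nonneg hx₀]))
  have hgeom : HasSum (fun j ↦ x ^ N / N * x ^ j) (x ^ N / (N * (1 - x))) := by
    rw [← div_div, div_eq_mul_inv _ (1 - x)]
    exact (hasSum_geometric_of_lt_one hx₀ hx₁).mul_left _
  have hterm (j : ℕ) : x ^ (j + N) / ((j + N : ℕ) : ℝ) ≤ x ^ N / N * x ^ j := by
    rw [pow_add, mul_comm, mul_div_right_comm]
    gcongr
    exact N.le_add_left j
  rw [← sum_range_pow_div_eq_sum_Ico hN, ← sub_le_iff_le_add']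
  exact hasSum_le hterm htail hgeom

end MercatorSeries

section FiniteFamilies

variable {ι : Type*} {s : Finset ι} {x : ι → ℝ}

lemma neg_log_prod_one_sub (hx : ∀ i ∈ s, x i < 1) :
    -Real.log (∏ i ∈ s, (1 - x i)) = ∑ i ∈ s, -Real.log (1 - x i) := by
  rw [Real.log_prod fun i hi ↦ (sub_pos.2 (hx i hi)).ne', sum_neg_distrib]

lemma sum_sum_pow_div_comm (t : Finset ℕ) :
    ∑ m ∈ t, (∑ i ∈ s, x i ^ m) / m = ∑ i ∈ s, ∑ m ∈ t, x i ^ m / m := by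
  simp only [sum_div]
  exact sum_comm

lemma sum_sum_pow_div_lt_neg_log_prod_one_sub (hs : s.Nonempty) (hx₀ : ∀ i ∈ s, 0 < x i)
    (hx₁ : ∀ i ∈ s, x i < 1) {N : ℕ} (hN : 1 ≤ N) :
    ∑ m ∈ Ico 1 N, (∑ i ∈ s, x i ^ m) / m < -Real.log (∏ i ∈ s, (1 - x i)) := by
  rw [neg_log_prod_one_sub hx₁, sum_sum_pow_div_comm]
  exact sum_lt_sum_of_nonempty hs fun i hi ↦
    sum_pow_div_lt_neg_log_one_sub (hx₀ i hi) (hx₁ i hi) hN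

lemma neg_log_prod_one_sub_le_sum_sum_pow_div_add {c : ℝ} (hc : c < 1) (hx₀ : ∀ i ∈ s, 0 ≤ x i)
    (hxc : ∀ i ∈ s, x i ≤ c) {N : ℕ} (hN : 1 ≤ N) :
    -Real.log (∏ i ∈ s, (1 - x i))
      ≤ ∑ m ∈ Ico 1 N, (∑ i ∈ s, x i ^ m) / m + (∑ i ∈ s, x i ^ N) / (N * (1 - c)) := by
  have hx₁ : ∀ i ∈ s, x i < 1 := fun i hi ↦ (hxc i hi).trans_lt hc
  rw [neg_log_prod_one_sub hx₁, sum_sum_pow_div_comm, sum_div, ← sum_add_distrib]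
  refine sum_le_sum fun i hi ↦
    (neg_log_one_sub_le_sum_pow_div_add (hx₀ i hi) (hx₁ i hi) hN).trans ?_
  have : 0 < 1 - c := sub_pos.2 hc
  have hpow : 0 ≤ x i ^ N := pow_nonneg (hx₀ i hi) N
  gcongr
  exact hxc i hi

end FiniteFamilies

section Birthday

variable {t : ℝ} {k N : ℕ}

lemma sum_powerSum_div_eq_sum_sum_div_pow (s u : Finset ℕ) :
    ∑ m ∈ u, (∑ i ∈ s, (i : ℝ) ^ m) / (m * t ^ m)
      = ∑ m ∈ u, (∑ i ∈ s, ((i : ℝ) / t) ^ m) / m := by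
  simp only [div_pow, ← sum_div, div_div, mul_comm]

lemma sum_powerSum_div_lt_neg_log_prod (hk : 2 ≤ k) (hkt : (k : ℝ) - 1 < t) (hN : 1 ≤ N) :
    ∑ m ∈ Ico 1 N, (∑ i ∈ Ico 1 k, (i : ℝ) ^ m) / (m * t ^ m)
      < -Real.log (∏ i ∈ Ico 1 k, (1 - (i : ℝ) / t)) := by
  have hi₀ : ∀ i ∈ Ico 1 k, (0 : ℝ) < i := fun i hi ↦ Nat.cast_pos.2 (mem_Ico.1 hi).1
  have hit : ∀ i ∈ Ico 1 k, (i : ℝ) < t := fun i hi ↦ by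
    have : (i : ℝ) + 1 ≤ k := by exact_mod_cast (mem_Ico.1 hi).2
    linarith
  rw [sum_powerSum_div_eq_sum_sum_div_pow]
  exact sum_sum_pow_div_lt_neg_log_prod_one_sub (nonempty_Ico.2 hk)
    (fun i hi ↦ div_pos (hi₀ i hi) ((hi₀ i hi).trans (hit i hi)))
    (fun i hi ↦ (div_lt_one ((hi₀ i hi).trans (hit i hi))).2 (hit i hi)) hN

lemma neg_log_prod_lt_sum_powerSum_div_add (hk : 1 ≤ k) (hkt : (k : ℝ) - 1 / 2 < t) (hN : 1 ≤ N) :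
    -Real.log (∏ i ∈ Ico 1 k, (1 - (i : ℝ) / t))
      < ∑ m ∈ Ico 1 N, (∑ i ∈ Ico 1 k, (i : ℝ) ^ m) / (m * t ^ m)
        + ((k : ℝ) - 1 / 2) ^ (N + 1) / (N * (N + 1) * (1 - ((k : ℝ) - 1 / 2) / t) * t ^ N) := by
  have ht : 0 < t := by
    have : (1 : ℝ) ≤ k := by exact_mod_cast hk
    linarith
  have hc : ((k : ℝ) - 1 / 2) / t < 1 := (div_lt_one ht).2 hkt
  have hik : ∀ i ∈ Ico 1 k, (i : ℝ) / t ≤ ((k : ℝ) - 1 / 2) / t := fun i hi ↦ by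
    have : (i : ℝ) + 1 ≤ k := by exact_mod_cast (mem_Ico.1 hi).2
    gcongr
    linarith
  rw [sum_powerSum_div_eq_sum_sum_div_pow]
  refine (neg_log_prod_one_sub_le_sum_sum_pow_div_add hc (fun i _ ↦ by positivity) hik hN).trans_lt
    (add_lt_add_right ?_ _)
  set d : ℝ := 1 - ((k : ℝ) - 1 / 2) / t
  have hd : 0 < d := sub_pos.2 hc
  calc (∑ i ∈ Ico 1 k, ((i : ℝ) / t) ^ N) / (N * d)
      = ((N + 1) * ∑ i ∈ Ico 1 k, (i : ℝ) ^ N) / (N * (N + 1) * d * t ^ N) := by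
        simp only [div_pow, ← sum_div]
        field_simp
    _ < ((k : ℝ) - 1 / 2) ^ (N + 1) / (N * (N + 1) * d * t ^ N) := by
        gcongr
        exact succ_mul_sum_pow_lt_sub_half_pow N hk

theorem birthday_log_bounds_general {t : ℝ} {k N : ℕ} (hk : 2 ≤ k) (hkt : (k : ℝ) - 1 / 2 < t)
    (hN : 1 ≤ N) :
    ∑ m ∈ Icc 1 (N - 1), (∑ i ∈ Icc 1 (k - 1), (i : ℝ) ^ m) / (m * t ^ m)
      < -Real.log (∏ i ∈ Icc 1 (k - 1), (1 - (i : ℝ) / t)) ∧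
    -Real.log (∏ i ∈ Icc 1 (k - 1), (1 - (i : ℝ) / t))
      < ∑ m ∈ Icc 1 (N - 1), (∑ i ∈ Icc 1 (k - 1), (i : ℝ) ^ m) / (m * t ^ m)
        + ((k : ℝ) - 1 / 2) ^ (N + 1) / (N * (N + 1) * (1 - ((k : ℝ) - 1 / 2) / t) * t ^ N) := by
  have hk₁ : 1 ≤ k := one_le_two.trans hk
  rw [Icc_sub_one_right_eq_Ico_of_not_isMin (not_isMin_of_lt (zero_lt_one.trans_le hN)),
    Icc_sub_one_right_eq_Ico_of_not_isMin (not_isMin_of_lt (zero_lt_two.trans_le hk))]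
  exact ⟨sum_powerSum_div_lt_neg_log_prod hk (by linarith) hN,
    neg_log_prod_lt_sum_powerSum_div_add hk₁ hkt hN⟩

end Birthday

/-- Theorem 2 (main theorem): arbitrarily exact bounds on `-ln(π^k_n)` via power sums. -/
theorem birthday_log_bounds (n k N : ℕ) (hn : 1 ≤ n) (hk : 2 ≤ k)
    (hkn : (k : ℝ) - 1/2 < n) (hN : 2 ≤ N) :
    (∑ m ∈ Finset.Icc 1 (N-1),
        (∑ i ∈ Finset.Icc 1 (k-1), (i : ℝ)^m) / (m * (n : ℝ)^m))
      < -Real.log (∏ i ∈ Finset.Icc 1 (k-1), (1 - (i : ℝ)/n)) ∧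
    -Real.log (∏ i ∈ Finset.Icc 1 (k-1), (1 - (i : ℝ)/n))
      < (∑ m ∈ Finset.Icc 1 (N-1),
          (∑ i ∈ Finset.Icc 1 (k-1), (i : ℝ)^m) / (m * (n : ℝ)^m))
        + ((k : ℝ) - 1/2)^(N+1) / (N * (N+1) * (1 - ((k : ℝ) - 1/2)/n) * (n : ℝ)^N) :=
  birthday_log_bounds_general hk hkn (one_le_two.trans hN)
end

section
/- For all natural numbers $k \geq 2$ and $m > 1$, $\sum_{i=1}^{k-1} i^m < \frac{(k - \frac12)^{m+1}}{m+1}$. -/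
/-!
The value of a convex function at the midpoint of an interval is at most its mean over the interval.
Applied to `x ↦ x ^ p` on the unit intervals centred at `1, …, k - 1`, which tile `[1/2, k - 1/2]`,
this bounds the power sum by the integral of `x ^ p` over `[1/2, k - 1/2]`. The missing piece
`[0, 1/2]` makes the inequality strict.
-/

open MeasureTheory

theorem mul_map_midpoint_le_integral_of_convexOn {f : ℝ → ℝ} {a b : ℝ} (hab : a ≤ b)
    (hf : ConvexOn ℝ (Set.Icc a b) f) (hfi : IntervalIntegrable f volume a b) :
    (b - a) * f ((a + b) / 2) ≤ ∫ x in a..b, f x := by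
  have reflect_integral : ∫ x in a..b, f (a + b - x) = ∫ x in a..b, f x := by simp
  have reflect_integrable : IntervalIntegrable (fun x ↦ f (a + b - x)) volume a b := by
    simpa using (hfi.comp_sub_left (a + b)).symm
  have le_add_reflect : ∀ x ∈ Set.Icc a b, 2 * f ((a + b) / 2) ≤ f x + f (a + b - x) := by
    intro x hx
    have hx' : a + b - x ∈ Set.Icc a b := ⟨by linarith [hx.2], by linarith [hx.1]⟩
    have midpoint_eq : (1 / 2 : ℝ) • x + (1 / 2 : ℝ) • (a + b - x) = (a + b) / 2 := by
      simp only [smul_eq_mul]; ring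
    have map_midpoint_le : f ((1 / 2 : ℝ) • x + (1 / 2 : ℝ) • (a + b - x)) ≤
        (1 / 2 : ℝ) • f x + (1 / 2 : ℝ) • f (a + b - x) :=
      hf.2 hx hx' (by norm_num) (by norm_num) (by norm_num)
    rw [midpoint_eq, smul_eq_mul, smul_eq_mul] at map_midpoint_le
    linarith
  have two_mul_le : 2 * ((b - a) * f ((a + b) / 2)) ≤ 2 * ∫ x in a..b, f x :=
    calc 2 * ((b - a) * f ((a + b) / 2)) = ∫ _ in a..b, 2 * f ((a + b) / 2) := by
          rw [intervalIntegral.integral_const, smul_eq_mul]; ring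
      _ ≤ ∫ x in a..b, (f x + f (a + b - x)) :=
          intervalIntegral.integral_mono_on hab intervalIntegrable_const
            (hfi.add reflect_integrable) le_add_reflect
      _ = 2 * ∫ x in a..b, f x := by
          rw [intervalIntegral.integral_add hfi reflect_integrable, reflect_integral, two_mul]
  linarith

theorem sum_Ico_le_integral_of_convexOn {f : ℝ → ℝ} {m n : ℕ} (hmn : m ≤ n)
    (hf : ConvexOn ℝ (Set.Icc (m - 1 / 2 : ℝ) (n - 1 / 2)) f)
    (hfi : IntervalIntegrable f volume (m - 1 / 2) (n - 1 / 2)) :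
    ∑ i ∈ Finset.Ico m n, f i ≤ ∫ x in (m - 1 / 2 : ℝ)..(n - 1 / 2), f x := by
  have unit_subset : ∀ i ∈ Set.Ico m n, Set.Icc (i - 1 / 2 : ℝ) ((i + 1 : ℕ) - 1 / 2) ⊆
      Set.Icc (m - 1 / 2 : ℝ) (n - 1 / 2) := fun i hi ↦
    Set.Icc_subset_Icc (sub_le_sub_right (Nat.cast_le.2 hi.1) _)
      (sub_le_sub_right (Nat.cast_le.2 hi.2) _)
  have unit_le (i : ℕ) : (i - 1 / 2 : ℝ) ≤ (i + 1 : ℕ) - 1 / 2 := by push_cast; linarith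
  have unit_integrable : ∀ i ∈ Set.Ico m n,
      IntervalIntegrable f volume (i - 1 / 2) ((i + 1 : ℕ) - 1 / 2) := fun i hi ↦
    hfi.mono_set <| by
      rw [Set.uIcc_of_le (unit_le i),
        Set.uIcc_of_le (sub_le_sub_right (Nat.cast_le.2 hmn) _)]
      exact unit_subset i hi
  rw [← intervalIntegral.sum_integral_adjacent_intervals_Ico
    (a := fun i : ℕ ↦ (i - 1 / 2 : ℝ)) hmn unit_integrable]
  refine Finset.sum_le_sum fun i hi ↦ ?_
  have hi' : i ∈ Set.Ico m n := Finset.mem_Ico.1 hi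
  have length_eq : ((i + 1 : ℕ) - 1 / 2 : ℝ) - (i - 1 / 2) = 1 := by push_cast; ring
  have midpoint_eq : ((i - 1 / 2 : ℝ) + ((i + 1 : ℕ) - 1 / 2)) / 2 = i := by push_cast; ring
  have map_midpoint_le := mul_map_midpoint_le_integral_of_convexOn (unit_le i)
    (hf.subset (unit_subset i hi') (convex_Icc _ _)) (unit_integrable i hi')
  rwa [length_eq, midpoint_eq, one_mul] at map_midpoint_le

theorem powerSum_lt_general {k : ℕ} {p : ℝ} (hk : 1 ≤ k) (hp : 1 ≤ p) :
    ∑ i ∈ Finset.Icc 1 (k - 1), (i : ℝ) ^ p < ((k : ℝ) - 1 / 2) ^ (p + 1) / (p + 1) := by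
  have hconv : ConvexOn ℝ (Set.Icc ((1 : ℕ) - 1 / 2 : ℝ) (k - 1 / 2)) fun x ↦ x ^ p :=
    (convexOn_rpow hp).subset (fun x hx ↦ le_trans (by norm_num) hx.1) (convex_Icc _ _)
  have hfi : IntervalIntegrable (fun x : ℝ ↦ x ^ p) volume ((1 : ℕ) - 1 / 2) (k - 1 / 2) :=
    intervalIntegral.intervalIntegrable_rpow' (by linarith)
  calc ∑ i ∈ Finset.Icc 1 (k - 1), (i : ℝ) ^ p = ∑ i ∈ Finset.Ico 1 k, (i : ℝ) ^ p := by
        rw [Finset.Icc_sub_one_right_eq_Ico_of_not_isMin (not_isMin_of_lt hk)]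
    _ ≤ ∫ x in ((1 : ℕ) - 1 / 2 : ℝ)..(k - 1 / 2), x ^ p :=
        sum_Ico_le_integral_of_convexOn hk hconv hfi
    _ = (((k : ℝ) - 1 / 2) ^ (p + 1) - ((1 : ℕ) - 1 / 2 : ℝ) ^ (p + 1)) / (p + 1) :=
        integral_rpow (.inl (by linarith))
    _ < ((k : ℝ) - 1 / 2) ^ (p + 1) / (p + 1) := by
        have hhalf : 0 < ((1 : ℕ) - 1 / 2 : ℝ) ^ (p + 1) := Real.rpow_pos_of_pos (by norm_num) _
        gcongr
        linarith

/-- The power sum bound: `∑_{i=1}^{k-1} i^m < (k - 1/2)^{m+1}/(m+1)` for `m > 1`. -/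
theorem powerSum_lt (k m : ℕ) (hk : 2 ≤ k) (hm : 1 < m) :
    ∑ i ∈ Finset.Icc 1 (k-1), (i : ℝ)^m < ((k : ℝ) - 1/2)^(m+1) / (m+1) := by
  exact_mod_cast powerSum_lt_general (p := m) (one_le_two.trans hk) (Nat.one_le_cast.2 hm.le)
end

section
/- Let $n \geq 1$ and $k \geq 2$ be natural numbers with $k - 1/2 < n$, let $\pi^k_n = \prod_{i=1}^{k-1}(1 - i/n)$, let $\beta^k_n = 1 - \pi^k_n$, and let $\mathfrak{p}(k-1,m) = \sum_{i=1}^{k-1} i^m$. For a natural number $N \geq 2$, set $l_N(k,n) = \sum_{m=1}^{N-1} \frac{\mathfrak{p}(k-1,m)}{m n^m}$ and $u_N(k,n) = l_N(k,n) + \frac{(k-\frac12)^{N+1}}{N(N+1)\left(1-\frac{k-1/2}{n}\right)n^N}$, and assume $u_N(k,n) < 1$. Then for every odd natural number $M$, $-\sum_{m=1}^{M+1} \frac{(-l_N(k,n))^m}{m!} < \beta^k_n < -\sum_{m=1}^{M} \frac{(-u_N(k,n))^m}{m!}$. -/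
/-!
Expanding each logarithm in `-ln π = ∑ i, -ln (1 - i / n)` gives
`-ln π = ∑ m ≥ 1, 𝔭(k - 1, m) / (m n ^ m)`, a series of positive terms, so its partial sum `l` is a
strict lower bound. For the tail, the midpoint inequality of Hermite and Hadamard for `x ^ m`
on the intervals `[i - 1/2, i + 1/2]` gives `𝔭(k - 1, m) ≤ (k - 1/2) ^ (m + 1) / (m + 1)`, and
the resulting series is dominated by a geometric one with ratio `(k - 1/2) / n`, so `-ln π < u`.
Finally `exp (-l)` and `exp (-u)` are compared with their Taylor polynomials: by the Lagrange form
of the remainder, `exp (-x)` minus its Taylor polynomial of degree `M` has the sign of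
`(-x) ^ (M + 1)`.
-/

open Finset Real
open scoped Nat

theorem exists_exp_eq_sum_range_add_lagrange (n : ℕ) (x : ℝ) :
    ∃ ξ : ℝ, exp x = ∑ m ∈ range n, x ^ m / m ! + exp ξ * x ^ n / n ! := by
  rcases n with _ | n
  · exact ⟨x, by simp⟩
  rcases eq_or_ne 0 x with rfl | hx
  · exact ⟨0, by simp [sum_range_succ']⟩
  obtain ⟨ξ, -, hξ⟩ := taylor_mean_remainder_lagrange_iteratedDeriv (n := n) hx
    contDiff_exp.contDiffOn
  have derivWithin_zero (m : ℕ) : iteratedDerivWithin m exp (Set.uIcc 0 x) 0 = 1 := by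
    rw [iteratedDerivWithin_eq_iteratedDeriv (uniqueDiffOn_uIcc hx) contDiff_exp.contDiffAt
      Set.left_mem_uIcc, iteratedDeriv_eq_iterate, iter_deriv_exp, exp_zero]
  have taylor : taylorWithinEval exp n (Set.uIcc 0 x) 0 x = ∑ m ∈ range (n + 1), x ^ m / m ! := by
    simp only [taylor_within_apply, derivWithin_zero, sub_zero, smul_eq_mul, mul_one,
      div_eq_inv_mul]
  rw [taylor, iteratedDeriv_eq_iterate, iter_deriv_exp, sub_zero] at hξ
  exact ⟨ξ, sub_eq_iff_eq_add'.mp hξ⟩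

theorem sum_range_pow_div_factorial_le_exp {n : ℕ} (hn : Even n) (x : ℝ) :
    ∑ m ∈ range n, x ^ m / m ! ≤ exp x := by
  obtain ⟨ξ, hξ⟩ := exists_exp_eq_sum_range_add_lagrange n x
  have remainder_nonneg : 0 ≤ exp ξ * x ^ n / n ! := by
    have := hn.pow_nonneg x
    positivity
  linarith

theorem exp_le_sum_range_pow_div_factorial {n : ℕ} (hn : Odd n) {x : ℝ} (hx : x ≤ 0) :
    exp x ≤ ∑ m ∈ range n, x ^ m / m ! := by
  obtain ⟨ξ, hξ⟩ := exists_exp_eq_sum_range_add_lagrange n x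
  have remainder_nonpos : exp ξ * x ^ n / n ! ≤ 0 :=
    div_nonpos_of_nonpos_of_nonneg
      (mul_nonpos_of_nonneg_of_nonpos (exp_pos ξ).le (hn.pow_nonpos hx)) (Nat.cast_nonneg _)
  linarith

theorem sum_range_succ_pow_div_factorial (M : ℕ) (x : ℝ) :
    ∑ m ∈ range (M + 1), x ^ m / m ! = 1 + ∑ m ∈ Icc 1 M, x ^ m / m ! := by
  rw [sum_range_eq_add_Ico _ M.succ_pos, Nat.succ_eq_add_one, Ico_add_one_right_eq_Icc]
  simp

theorem two_mul_midpoint_pow_le {a b : ℝ} (ha : 0 ≤ a) (hb : 0 ≤ b) (m : ℕ) :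
    2 * ((a + b) / 2) ^ m ≤ a ^ m + b ^ m := by
  have h := (convexOn_pow m).2 ha hb (by norm_num : (0 : ℝ) ≤ 1 / 2)
    (by norm_num : (0 : ℝ) ≤ 1 / 2) (by norm_num)
  simp only [smul_eq_mul] at h
  rw [show 1 / 2 * a + 1 / 2 * b = (a + b) / 2 by ring] at h
  linarith

theorem mul_midpoint_pow_le_pow_succ_sub {a b : ℝ} (ha : 0 ≤ a) (hab : a ≤ b) (m : ℕ) :
    (b - a) * ((m + 1) * ((a + b) / 2) ^ m) ≤ b ^ (m + 1) - a ^ (m + 1) := by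
  induction m with
  | zero => simp
  | succ m ih =>
    have h_mid : 0 ≤ (a + b) / 2 := by linarith
    have h_jensen := two_mul_midpoint_pow_le ha (ha.trans hab) (m + 1)
    push_cast
    calc (b - a) * ((m + 1 + 1) * ((a + b) / 2) ^ (m + 1))
        = (a + b) / 2 * ((b - a) * ((m + 1) * ((a + b) / 2) ^ m))
          + (b - a) / 2 * (2 * ((a + b) / 2) ^ (m + 1)) := by ring
      _ ≤ (a + b) / 2 * (b ^ (m + 1) - a ^ (m + 1))
          + (b - a) / 2 * (a ^ (m + 1) + b ^ (m + 1)) := by gcongr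
      _ = b ^ (m + 1 + 1) - a ^ (m + 1 + 1) := by ring

/-- The power sum `𝔭(k, m) = 1 ^ m + ⋯ + k ^ m`, the numerator of the terms in the expansion of
`-ln π`. -/
def powerSum (k m : ℕ) : ℝ := ∑ i ∈ Icc 1 k, (i : ℝ) ^ m

theorem powerSum_pos {k : ℕ} (hk : 1 ≤ k) (m : ℕ) : 0 < powerSum k m := by
  refine sum_pos (fun i hi => ?_) (nonempty_Icc.mpr hk)
  have : 0 < i := (mem_Icc.mp hi).1
  positivity

theorem powerSum_le (k m : ℕ) : powerSum k m ≤ ((k : ℝ) + 1 / 2) ^ (m + 1) / (m + 1) := by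
  induction k with
  | zero =>
    have h_zero : powerSum 0 m = 0 := by simp [powerSum]
    rw [h_zero]
    positivity
  | succ k ih =>
    have h_midpoint : (m + 1) * ((k : ℝ) + 1) ^ m
        ≤ (k + 1 + 1 / 2 : ℝ) ^ (m + 1) - (k + 1 / 2 : ℝ) ^ (m + 1) := by
      convert! mul_midpoint_pow_le_pow_succ_sub (a := (k : ℝ) + 1 / 2) (b := k + 1 + 1 / 2)
        (by positivity) (by linarith) m using 1
      ring
    rw [le_div_iff₀ (by positivity)] at ih ⊢
    rw [powerSum, sum_Icc_succ_top (by omega), ← powerSum]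
    push_cast
    linarith

theorem hasSum_pow_div_mul_pow {x y : ℝ} (hxy : |x / y| < 1) :
    HasSum (fun m : ℕ => x ^ m / (m * y ^ m)) (-log (1 - x / y)) := by
  rw [← hasSum_nat_add_iff' 1, sum_range_one, Nat.cast_zero, zero_mul, div_zero, sub_zero]
  refine (hasSum_pow_div_log_of_abs_lt_one hxy).congr_fun fun m => ?_
  rw [div_pow, div_div]
  push_cast
  ring

theorem cast_div_lt_one {n : ℝ} {k i : ℕ} (hkn : (k : ℝ) < n) (hi : i ≤ k) : (i : ℝ) / n < 1 :=
  (div_lt_one ((Nat.cast_nonneg k).trans_lt hkn)).mpr ((Nat.cast_le.mpr hi).trans_lt hkn)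

theorem sub_sum_range_lt_of_le_pow_div {f : ℕ → ℝ} {s c n : ℝ} {N : ℕ} (hN : 1 ≤ N) (hc : 0 < c)
    (hcn : c < n) (hf : ∀ m, N ≤ m → f m ≤ c ^ (m + 1) / (m * (m + 1) * n ^ m))
    (hs : HasSum f s) :
    s - ∑ m ∈ range N, f m < c ^ (N + 1) / (N * (N + 1) * (1 - c / n) * n ^ N) := by
  have hn : 0 < n := hc.trans hcn
  have h_geom : HasSum (fun m => c ^ (m + N + 1) / (N * (N + 1) * n ^ (m + N)))
      (c ^ (N + 1) / (N * (N + 1) * (1 - c / n) * n ^ N)) := by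
    have h_sum : c ^ (N + 1) / (N * (N + 1) * n ^ N) * (1 - c / n)⁻¹
        = c ^ (N + 1) / (N * (N + 1) * (1 - c / n) * n ^ N) := by
      rw [← div_eq_mul_inv, div_div, mul_right_comm]
    rw [← h_sum]
    refine ((hasSum_geometric_of_lt_one (div_pos hc hn).le ((div_lt_one hn).mpr hcn)).mul_left
      (c ^ (N + 1) / (N * (N + 1) * n ^ N))).congr_fun fun m => ?_
    rw [div_pow, div_mul_div_comm]
    ring
  refine hasSum_lt (i := 1) (fun m => (hf (m + N) le_add_self).trans ?_)
    ((hf (1 + N) le_add_self).trans_lt ?_) ((hasSum_nat_add_iff' N).mpr hs) h_geom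
  · gcongr <;> simp
  · gcongr <;> simp

/-- The term `𝔭(k, m) / (m n ^ m)` of the expansion of `-ln (∏ i ≤ k, (1 - i / n))`. At `m = 0`
division by zero makes it `0`, so that the series may be summed from `m = 0`. -/
noncomputable def negLogTerm (n : ℝ) (k m : ℕ) : ℝ := powerSum k m / (m * n ^ m)

theorem hasSum_negLogTerm {n : ℝ} {k : ℕ} (hkn : (k : ℝ) < n) :
    HasSum (negLogTerm n k) (-log (∏ i ∈ Icc 1 k, (1 - (i : ℝ) / n))) := by
  have hn : 0 < n := (Nat.cast_nonneg k).trans_lt hkn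
  have h_lt_one : ∀ i ∈ Icc 1 k, (i : ℝ) / n < 1 := fun i hi =>
    cast_div_lt_one hkn (mem_Icc.mp hi).2
  have h_terms : HasSum (fun m : ℕ => ∑ i ∈ Icc 1 k, (i : ℝ) ^ m / (m * n ^ m))
      (∑ i ∈ Icc 1 k, -log (1 - (i : ℝ) / n)) :=
    hasSum_sum fun i hi => hasSum_pow_div_mul_pow <| by
      rw [abs_of_nonneg (by positivity)]
      exact h_lt_one i hi
  rw [log_prod fun i hi => (sub_pos.mpr (h_lt_one i hi)).ne', ← sum_neg_distrib]
  refine h_terms.congr_fun fun m => ?_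
  rw [negLogTerm, powerSum, sum_div]

theorem negLogTerm_pos {n : ℝ} {k m : ℕ} (hn : 0 < n) (hk : 1 ≤ k) (hm : 1 ≤ m) :
    0 < negLogTerm n k m := by
  have := powerSum_pos hk m
  unfold negLogTerm
  positivity

theorem negLogTerm_nonneg {n : ℝ} (hn : 0 < n) (k m : ℕ) : 0 ≤ negLogTerm n k m := by
  unfold negLogTerm powerSum
  positivity

theorem negLogTerm_le {n : ℝ} (hn : 0 < n) (k m : ℕ) :
    negLogTerm n k m ≤ ((k : ℝ) + 1 / 2) ^ (m + 1) / (m * (m + 1) * n ^ m) :=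
  calc negLogTerm n k m
      ≤ ((k : ℝ) + 1 / 2) ^ (m + 1) / (m + 1) / (m * n ^ m) := by
        unfold negLogTerm
        gcongr
        exact powerSum_le k m
    _ = ((k : ℝ) + 1 / 2) ^ (m + 1) / (m * (m + 1) * n ^ m) := by
        rw [div_div]
        ring

/-- The bound `l_N(k, n)` of the paper, a partial sum of the expansion of `-ln π`. -/
noncomputable def negLogLower (n : ℝ) (k N : ℕ) : ℝ := ∑ m ∈ Icc 1 (N - 1), negLogTerm n (k - 1) m

/-- The bound `u_N(k, n)` of the paper, `l_N(k, n)` plus an estimate of the omitted terms. -/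
noncomputable def negLogUpper (n : ℝ) (k N : ℕ) : ℝ :=
  negLogLower n k N +
    ((k : ℝ) - 1 / 2) ^ (N + 1) / (N * (N + 1) * (1 - ((k : ℝ) - 1 / 2) / n) * n ^ N)

/-- The probability `π^k_n` that `k` samples from a space of size `n` are distinct, for real `n`. -/
noncomputable def distinctProb (n : ℝ) (k : ℕ) : ℝ := ∏ i ∈ Icc 1 (k - 1), (1 - (i : ℝ) / n)

theorem distinctProb_pos {n : ℝ} {k : ℕ} (hkn : ((k - 1 : ℕ) : ℝ) < n) : 0 < distinctProb n k :=
  prod_pos fun _ hi => sub_pos.mpr (cast_div_lt_one hkn (mem_Icc.mp hi).2)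

theorem negLogLower_nonneg {n : ℝ} (hn : 0 < n) (k N : ℕ) : 0 ≤ negLogLower n k N :=
  sum_nonneg fun m _ => negLogTerm_nonneg hn (k - 1) m

theorem negLogLower_eq_sum_range (n : ℝ) (k : ℕ) {N : ℕ} (hN : 1 ≤ N) :
    negLogLower n k N = ∑ m ∈ range N, negLogTerm n (k - 1) m := by
  obtain ⟨P, rfl⟩ := Nat.exists_eq_add_of_le' hN
  rw [sum_range_eq_add_Ico _ P.succ_pos, Nat.succ_eq_add_one, Ico_add_one_right_eq_Icc]
  simp [negLogLower, negLogTerm]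

theorem negLogLower_lt_neg_log {n : ℝ} {k N : ℕ} (hk : 2 ≤ k) (hkn : ((k - 1 : ℕ) : ℝ) < n)
    (hN : 1 ≤ N) : negLogLower n k N < -log (distinctProb n k) := by
  have hn : 0 < n := (Nat.cast_nonneg _).trans_lt hkn
  calc negLogLower n k N = ∑ m ∈ range N, negLogTerm n (k - 1) m :=
        negLogLower_eq_sum_range n k hN
    _ < ∑ m ∈ range (N + 1), negLogTerm n (k - 1) m := by
        rw [sum_range_succ]
        exact lt_add_of_pos_right _ (negLogTerm_pos hn (by omega) hN)
    _ ≤ -log (distinctProb n k) :=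
        sum_le_hasSum _ (fun m _ => negLogTerm_nonneg hn (k - 1) m) (hasSum_negLogTerm hkn)

theorem neg_log_lt_negLogUpper {n : ℝ} {k N : ℕ} (hk : 1 ≤ k) (hkn : (k : ℝ) - 1 / 2 < n)
    (hN : 1 ≤ N) : -log (distinctProb n k) < negLogUpper n k N := by
  have hc : ((k - 1 : ℕ) : ℝ) + 1 / 2 = k - 1 / 2 := by
    push_cast [hk]
    ring
  have hc_pos : 0 < (k : ℝ) - 1 / 2 := by
    rw [← hc]
    positivity
  have h_tail := sub_sum_range_lt_of_le_pow_div hN hc_pos hkn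
    (fun m _ => hc ▸ negLogTerm_le (hc_pos.trans hkn) (k - 1) m)
    (hasSum_negLogTerm (k := k - 1) (by linarith))
  rw [← negLogLower_eq_sum_range n k hN] at h_tail
  exact sub_lt_iff_lt_add'.mp h_tail

theorem birthday_prob_bounds_general {n : ℝ} {k N M : ℕ} (hk : 2 ≤ k)
    (hkn : (k : ℝ) - 1 / 2 < n) (hN : 1 ≤ N) (hM : Odd M) :
    -(∑ m ∈ Icc 1 (M + 1), (-negLogLower n k N) ^ m / m !) < 1 - distinctProb n k ∧
      1 - distinctProb n k < -(∑ m ∈ Icc 1 M, (-negLogUpper n k N) ^ m / m !) := by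
  have hkn' : ((k - 1 : ℕ) : ℝ) < n := by
    push_cast [(by omega : 1 ≤ k)]
    linarith
  have hπ := distinctProb_pos hkn'
  have h_lower : distinctProb n k < exp (-negLogLower n k N) :=
    (log_lt_iff_lt_exp hπ).mp (lt_neg.mp (negLogLower_lt_neg_log hk hkn' hN))
  have h_upper : exp (-negLogUpper n k N) < distinctProb n k :=
    (lt_log_iff_exp_lt hπ).mp (neg_lt.mp (neg_log_lt_negLogUpper (by omega) hkn hN))
  have taylor_lower := exp_le_sum_range_pow_div_factorial (n := M + 1 + 1) hM.add_one.add_one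
    (neg_nonpos.mpr (negLogLower_nonneg ((Nat.cast_nonneg _).trans_lt hkn') k N))
  have taylor_upper := sum_range_pow_div_factorial_le_exp hM.add_one (-negLogUpper n k N)
  rw [sum_range_succ_pow_div_factorial] at taylor_lower taylor_upper
  constructor <;> linarith

/-- Corollary 4: bounds on the birthday surprise probability `β^k_n` obtained from the
lower and upper bounds `l_N`, `u_N` on `-ln(π^k_n)`. -/
theorem birthday_prob_bounds (n k N : ℕ) (hn : 1 ≤ n) (hk : 2 ≤ k)
    (hkn : (k : ℝ) - 1/2 < n) (hN : 2 ≤ N) (l u : ℝ)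
    (hl : l = ∑ m ∈ Finset.Icc 1 (N-1),
        (∑ i ∈ Finset.Icc 1 (k-1), (i : ℝ)^m) / (m * (n : ℝ)^m))
    (hu : u = l + ((k : ℝ) - 1/2)^(N+1) / (N * (N+1) * (1 - ((k : ℝ) - 1/2)/n) * (n : ℝ)^N))
    (hu1 : u < 1) (M : ℕ) (hM : Odd M) :
    -(∑ m ∈ Finset.Icc 1 (M+1), (-l)^m / (Nat.factorial m))
      < 1 - ∏ i ∈ Finset.Icc 1 (k-1), (1 - (i : ℝ)/n) ∧
    1 - ∏ i ∈ Finset.Icc 1 (k-1), (1 - (i : ℝ)/n)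
      < -(∑ m ∈ Finset.Icc 1 M, (-u)^m / (Nat.factorial m)) := by
  subst hu hl
  exact birthday_prob_bounds_general hk hkn (one_le_two.trans hN) hM
end

section
/- Let $n \geq 1$ and $k \geq 2$ be natural numbers with $k \leq n$ and $k < \sqrt{n}$, let $\pi^k_n = \prod_{i=1}^{k-1}(1 - i/n)$, and let $\beta^k_n = 1 - \pi^k_n$. Then $\frac{(k-1)k}{2n} - \frac{(k-1)^2 k^2}{4n^2} < \beta^k_n < \frac{(k-1)k}{2n} + \frac{(k-\frac12)^3}{6n^2\left(1-\frac{k-1/2}{n}\right)}$. -/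
/-!
The expected number of colliding pairs is `s = ∑ i/n = (k-1)k/(2n)`. For numbers in `[0, 1]` with
sum `s`, the first two Bonferroni inequalities give `1 - s ≤ ∏ (1 - i/n) ≤ 1 - s + s²/2`, that is
`s - s²/2 ≤ β ≤ s`. The lower bound of the theorem subtracts all of `s²`, and the upper bound adds
a positive term to `s`.
-/

open Finset

section Bonferroni

variable {ι : Type*} {s : Finset ι}

theorem one_sub_sum_le_prod_one_sub {R : Type*} [CommRing R] [PartialOrder R] [IsOrderedRing R]
    {f : ι → R} (hf₀ : ∀ i ∈ s, 0 ≤ f i) (hf₁ : ∀ i ∈ s, f i ≤ 1) :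
    1 - ∑ i ∈ s, f i ≤ ∏ i ∈ s, (1 - f i) := by
  classical
  induction s using Finset.induction_on with
  | empty => simp
  | insert a s ha ih =>
    rw [forall_mem_insert] at hf₀ hf₁
    rw [sum_insert ha, prod_insert ha]
    calc 1 - (f a + ∑ i ∈ s, f i)
        ≤ 1 - (f a + ∑ i ∈ s, f i) + f a * ∑ i ∈ s, f i :=
          le_add_of_nonneg_right (mul_nonneg hf₀.1 (sum_nonneg hf₀.2))
      _ = (1 - f a) * (1 - ∑ i ∈ s, f i) := by ring
      _ ≤ (1 - f a) * ∏ i ∈ s, (1 - f i) :=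
          mul_le_mul_of_nonneg_left (ih hf₀.2 hf₁.2) (sub_nonneg.2 hf₁.1)

theorem prod_one_sub_le_one_sub_sum_add_sq_div_two {K : Type*} [Field K] [LinearOrder K]
    [IsStrictOrderedRing K] {f : ι → K} (hf₀ : ∀ i ∈ s, 0 ≤ f i) (hf₁ : ∀ i ∈ s, f i ≤ 1) :
    ∏ i ∈ s, (1 - f i) ≤ 1 - ∑ i ∈ s, f i + (∑ i ∈ s, f i) ^ 2 / 2 := by
  classical
  induction s using Finset.induction_on with
  | empty => simp
  | insert a s ha ih =>
    rw [forall_mem_insert] at hf₀ hf₁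
    rw [sum_insert ha, prod_insert ha]
    have first_order : f a * (1 - ∑ i ∈ s, f i) ≤ f a * ∏ i ∈ s, (1 - f i) :=
      mul_le_mul_of_nonneg_left (one_sub_sum_le_prod_one_sub hf₀.2 hf₁.2) hf₀.1
    calc (1 - f a) * ∏ i ∈ s, (1 - f i)
        = ∏ i ∈ s, (1 - f i) - f a * ∏ i ∈ s, (1 - f i) := by ring
      _ ≤ (1 - ∑ i ∈ s, f i + (∑ i ∈ s, f i) ^ 2 / 2) - f a * (1 - ∑ i ∈ s, f i) :=
          sub_le_sub (ih hf₀.2 hf₁.2) first_order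
      _ = 1 - (f a + ∑ i ∈ s, f i) + (f a + ∑ i ∈ s, f i) ^ 2 / 2 - f a ^ 2 / 2 := by ring
      _ ≤ 1 - (f a + ∑ i ∈ s, f i) + (f a + ∑ i ∈ s, f i) ^ 2 / 2 :=
          sub_le_self _ (by positivity)

end Bonferroni

section Birthday

/-- The probability `β^k_n` that `k` uniform samples from a space of size `n` are not all
distinct, through its product formula: the factor `1 - i/n` is the conditional probability that
the sample after `i` distinct ones avoids them. At `n = 0` the convention `i/0 = 0` makes it `0`. -/
noncomputable def birthdayProb (n k : ℕ) : ℝ :=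
  1 - ∏ i ∈ Icc 1 (k - 1), (1 - (i : ℝ) / n)

theorem sum_Icc_one_pred_cast {K : Type*} [Field K] [CharZero K] (k : ℕ) :
    ∑ i ∈ Icc 1 (k - 1), (i : K) = (k - 1) * k / 2 := by
  obtain _ | m := k
  · simp
  · induction m with
    | zero => simp
    | succ m ih =>
      rw [Nat.add_sub_cancel] at ih ⊢
      rw [sum_Icc_succ_top (by lia), ih]
      push_cast
      ring

theorem sum_Icc_one_pred_cast_div {K : Type*} [Field K] [CharZero K] (k : ℕ) (x : K) :
    ∑ i ∈ Icc 1 (k - 1), (i : K) / x = (k - 1) * k / (2 * x) := by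
  rw [← sum_div, sum_Icc_one_pred_cast, div_div]

variable {n k : ℕ}

theorem birthdayProb_le (h : k - 1 ≤ n) : birthdayProb n k ≤ ((k : ℝ) - 1) * k / (2 * n) := by
  have prod_ge := one_sub_sum_le_prod_one_sub (s := Icc 1 (k - 1)) (f := fun i ↦ (i : ℝ) / n)
    (fun _ _ ↦ by positivity)
    (fun _ hi ↦ div_le_one_of_le₀ (Nat.cast_le.2 ((mem_Icc.1 hi).2.trans h)) n.cast_nonneg)
  rw [sum_Icc_one_pred_cast_div] at prod_ge
  exact sub_le_comm.1 prod_ge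

theorem sub_sq_div_two_le_birthdayProb (h : k - 1 ≤ n) :
    ((k : ℝ) - 1) * k / (2 * n) - (((k : ℝ) - 1) * k / (2 * n)) ^ 2 / 2 ≤ birthdayProb n k := by
  have prod_le := prod_one_sub_le_one_sub_sum_add_sq_div_two (s := Icc 1 (k - 1))
    (f := fun i ↦ (i : ℝ) / n) (fun _ _ ↦ by positivity)
    (fun _ hi ↦ div_le_one_of_le₀ (Nat.cast_le.2 ((mem_Icc.1 hi).2.trans h)) n.cast_nonneg)
  rw [sum_Icc_one_pred_cast_div] at prod_le
  rw [birthdayProb]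
  linarith

theorem lt_birthdayProb (hk : 2 ≤ k) (h : k - 1 ≤ n) :
    ((k : ℝ) - 1) * k / (2 * n) - ((k : ℝ) - 1) ^ 2 * (k : ℝ) ^ 2 / (4 * (n : ℝ) ^ 2)
      < birthdayProb n k := by
  have two_le : (2 : ℝ) ≤ k := by exact_mod_cast hk
  have n_pos : (0 : ℝ) < n := Nat.cast_pos.2 (by lia)
  have mean_pos : 0 < ((k : ℝ) - 1) * k / (2 * n) :=
    div_pos (mul_pos (by linarith) (by linarith)) (by linarith)
  calc ((k : ℝ) - 1) * k / (2 * n) - ((k : ℝ) - 1) ^ 2 * (k : ℝ) ^ 2 / (4 * (n : ℝ) ^ 2)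
      = ((k : ℝ) - 1) * k / (2 * n) - (((k : ℝ) - 1) * k / (2 * n)) ^ 2 := by ring
    _ < ((k : ℝ) - 1) * k / (2 * n) - (((k : ℝ) - 1) * k / (2 * n)) ^ 2 / 2 :=
        sub_lt_sub_left (half_lt_self (pow_pos mean_pos 2)) _
    _ ≤ birthdayProb n k := sub_sq_div_two_le_birthdayProb h

theorem birthdayProb_lt (hk : 1 ≤ k) (hkn : k ≤ n) :
    birthdayProb n k < ((k : ℝ) - 1) * k / (2 * n)
      + ((k : ℝ) - 1 / 2) ^ 3 / (6 * (n : ℝ) ^ 2 * (1 - ((k : ℝ) - 1 / 2) / n)) := by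
  have one_le : (1 : ℝ) ≤ k := by exact_mod_cast hk
  have le_n : (k : ℝ) ≤ n := by exact_mod_cast hkn
  have n_pos : (0 : ℝ) < n := by linarith
  have one_sub_pos : 0 < 1 - ((k : ℝ) - 1 / 2) / n :=
    sub_pos.2 ((div_lt_one n_pos).2 (by linarith))
  have error_pos :
      0 < ((k : ℝ) - 1 / 2) ^ 3 / (6 * (n : ℝ) ^ 2 * (1 - ((k : ℝ) - 1 / 2) / n)) :=
    div_pos (pow_pos (by linarith) 3) (mul_pos (by positivity) one_sub_pos)
  exact (birthdayProb_le (by lia)).trans_lt (lt_add_of_pos_right _ error_pos)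

end Birthday

theorem birthday_prob_bounds_M1_general (n k : ℕ) (hk : 2 ≤ k) (hkn : k ≤ n) :
    ((k : ℝ) - 1) * k / (2 * n) - ((k : ℝ) - 1)^2 * (k : ℝ)^2 / (4 * (n : ℝ)^2)
      < 1 - ∏ i ∈ Finset.Icc 1 (k-1), (1 - (i : ℝ)/n) ∧
    1 - ∏ i ∈ Finset.Icc 1 (k-1), (1 - (i : ℝ)/n)
      < ((k : ℝ) - 1) * k / (2 * n)
        + ((k : ℝ) - 1/2)^3 / (6 * (n : ℝ)^2 * (1 - ((k : ℝ) - 1/2)/n)) :=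
  ⟨lt_birthdayProb hk (by lia), birthdayProb_lt (by lia) hkn⟩

/-- The `M = 1` case (Equation (3)): explicit bounds on `β^k_n` for `k < √n`. -/
theorem birthday_prob_bounds_M1 (n k : ℕ) (hn : 1 ≤ n) (hk : 2 ≤ k) (hkn : k ≤ n)
    (hsqrt : (k : ℝ) < Real.sqrt n) :
    ((k : ℝ) - 1) * k / (2 * n) - ((k : ℝ) - 1)^2 * (k : ℝ)^2 / (4 * (n : ℝ)^2)
      < 1 - ∏ i ∈ Finset.Icc 1 (k-1), (1 - (i : ℝ)/n) ∧
    1 - ∏ i ∈ Finset.Icc 1 (k-1), (1 - (i : ℝ)/n)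
      < ((k : ℝ) - 1) * k / (2 * n)
        + ((k : ℝ) - 1/2)^3 / (6 * (n : ℝ)^2 * (1 - ((k : ℝ) - 1/2)/n)) :=
  birthday_prob_bounds_M1_general n k hk hkn
end

section
/- Let $n \geq 1$ and $k \geq 1$ be natural numbers with $k \leq n$, let $\pi^k_n = \prod_{i=1}^{k-1}(1 - i/n)$, and let $\mathfrak{p}(k-1,m) = \sum_{i=1}^{k-1} i^m$. Then the series $\sum_{m=1}^{\infty} \frac{\mathfrak{p}(k-1,m)}{m n^m}$ converges and equals $-\ln(\pi^k_n)$. -/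
theorem hasSum_sum_pow_div_neg_log_prod_one_sub {ι : Type*} {s : Finset ι} {x : ι → ℝ}
    (hx : ∀ i ∈ s, |x i| < 1) :
    HasSum (fun m : ℕ => (∑ i ∈ s, x i ^ (m + 1)) / (m + 1))
      (-Real.log (∏ i ∈ s, (1 - x i))) := by
  have factor_ne_zero : ∀ i ∈ s, 1 - x i ≠ 0 := fun i hi =>
    (sub_pos.mpr (lt_of_abs_lt (hx i hi))).ne'
  simp only [Real.log_prod factor_ne_zero, ← Finset.sum_neg_distrib, Finset.sum_div]
  exact hasSum_sum fun i hi => Real.hasSum_pow_div_log_of_abs_lt_one (hx i hi)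

theorem log_birthday_series_general {ι : Type*} {s : Finset ι} {a : ι → ℝ} {c : ℝ}
    (ha : ∀ i ∈ s, |a i| < |c|) :
    HasSum (fun m : ℕ => (∑ i ∈ s, a i ^ (m + 1)) / ((m + 1 : ℕ) * c ^ (m + 1)))
      (-Real.log (∏ i ∈ s, (1 - a i / c))) := by
  have ratio_lt_one : ∀ i ∈ s, |a i / c| < 1 := fun i hi => by
    rw [abs_div]
    exact (div_lt_one ((abs_nonneg _).trans_lt (ha i hi))).mpr (ha i hi)
  have term_eq (m : ℕ) : (∑ i ∈ s, a i ^ (m + 1)) / ((m + 1 : ℕ) * c ^ (m + 1)) =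
      (∑ i ∈ s, (a i / c) ^ (m + 1)) / (m + 1) := by
    simp only [div_pow, ← Finset.sum_div, div_div, mul_comm, Nat.cast_add_one]
  simpa only [term_eq] using hasSum_sum_pow_div_neg_log_prod_one_sub ratio_lt_one

/-- Equation (1): the series `∑_{m=1}^∞ p(k-1,m)/(m nᵐ)` converges to `-ln(π^k_n)`. -/
theorem log_birthday_series (n k : ℕ) (hn : 1 ≤ n) (hk : 1 ≤ k) (hkn : k ≤ n) :
    HasSum (fun m : ℕ =>
        (∑ i ∈ Finset.Icc 1 (k-1), (i : ℝ)^(m+1)) / ((m+1 : ℕ) * (n : ℝ)^(m+1)))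
      (-Real.log (∏ i ∈ Finset.Icc 1 (k-1), (1 - (i : ℝ)/n))) := by
  refine log_birthday_series_general fun i hi => ?_
  have i_lt_n : i < n := by grind
  simpa only [Nat.abs_cast, Nat.cast_lt] using i_lt_n
end

section
/- Let $n \geq 1$ and $1 \leq k \leq n$ be natural numbers, and fix an element $x$ of an $n$-element set $S$. The number of functions $f : S \to S$ such that the orbit $\{f^j(x) : j \geq 0\}$ of $x$ under $f$ has size exactly $k$ is $k \cdot n^{n-k} \cdot \prod_{i=1}^{k-1}(n-i)$. Equivalently, for a uniformly random function $f : S \to S$, the probability that the orbit of $x$ under $f$ has size exactly $k$ is $\pi^k_n \cdot \frac{k}{n}$, where $\pi^k_n = \prod_{i=1}^{k-1}(1 - i/n)$. -/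
/-!
Write `n = |S|`. Condition on the first `l + 1` points `x, f x, …, f^[l] x` being distinct. The
value `f (f^[l] x)` is still uniform on `S`, and the orbit has size exactly `l + 1` precisely when
this value is one of the `l + 1` points already visited. Hence `P(size = k) = P(size ≥ k) * k / n`,
so that `P(size ≥ k + 1) = P(size ≥ k) * (1 - k / n)` and the product formula follows by induction.
Uniformity is made bijective by changing the value of `f` at `f^[l] x`, which affects none of the
first `l + 1` points.
-/

open Set Function

section Orbit

variable {α : Type*} {f : α → α} {x : α}

/-- The orbit `{x, f x, f (f x), …}` of `x` under `f`, starting with `x` itself. -/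
def forwardOrbit (f : α → α) (x : α) : Set α :=
  {y | ∃ j : ℕ, f^[j] x = y}

/-- The number of points in the orbit of `x` under `f`, with the junk value `0` if the orbit is
infinite. -/
noncomputable def orbitSize (f : α → α) (x : α) : ℕ :=
  (forwardOrbit f x).ncard

theorem forwardOrbit_subset_image_Iio {i j : ℕ} (hij : i < j) (h : f^[i] x = f^[j] x) :
    forwardOrbit f x ⊆ (f^[·] x) '' Iio j := by
  rintro _ ⟨m, rfl⟩
  induction m using Nat.strong_induction_on with
  | _ m ih =>
    rcases lt_or_ge m j with hm | hm
    · exact mem_image_of_mem _ hm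
    · have shift : f^[m] x = f^[m - j + i] x := by
        rw [iterate_add_apply, h, ← iterate_add_apply, Nat.sub_add_cancel hm]
      rw [shift]
      exact ih _ (by omega)

theorem natCast_le_encard_forwardOrbit_iff {k : ℕ} :
    (k : ℕ∞) ≤ (forwardOrbit f x).encard ↔ InjOn (f^[·] x) (Iio k) := by
  have encard_Iio (j : ℕ) : (Iio j).encard = j := by
    rw [← (finite_Iio j).cast_ncard_eq, ncard_Iio_nat]
  constructor
  · intro hk
    by_contra hinj
    obtain ⟨i, j, hij, hj, heq⟩ : ∃ i j, i < j ∧ j < k ∧ f^[i] x = f^[j] x := by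
      simp only [InjOn, mem_Iio, not_forall] at hinj
      obtain ⟨i, hi, j, hj, heq, hne⟩ := hinj
      rcases lt_or_gt_of_ne hne with hlt | hlt
      · exact ⟨i, j, hlt, hj, heq⟩
      · exact ⟨j, i, hlt, hi, heq.symm⟩
    have hle : (k : ℕ∞) ≤ j := calc
      (k : ℕ∞) ≤ (forwardOrbit f x).encard := hk
      _ ≤ ((f^[·] x) '' Iio j).encard := encard_le_encard (forwardOrbit_subset_image_Iio hij heq)
      _ ≤ (Iio j).encard := encard_image_le _ _
      _ = j := encard_Iio j
    exact (Nat.cast_le.mp hle).not_gt hj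
  · intro hinj
    rw [← encard_Iio k, ← hinj.encard_image]
    exact encard_le_encard (image_subset_iff.mpr fun j _ => ⟨j, rfl⟩)

theorem le_orbitSize_iff [Finite α] {k : ℕ} :
    k ≤ orbitSize f x ↔ InjOn (f^[·] x) (Iio k) := by
  rw [orbitSize, ← natCast_le_encard_forwardOrbit_iff,
    ← (toFinite (forwardOrbit f x)).cast_ncard_eq, Nat.cast_le]

theorem orbitSize_eq_succ_iff [Finite α] {l : ℕ} :
    orbitSize f x = l + 1 ↔
      InjOn (f^[·] x) (Iio (l + 1)) ∧ f^[l + 1] x ∈ (f^[·] x) '' Iio (l + 1) := by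
  have hsucc : l + 1 + 1 ≤ orbitSize f x ↔
      InjOn (f^[·] x) (Iio (l + 1)) ∧ f^[l + 1] x ∉ (f^[·] x) '' Iio (l + 1) := by
    rw [le_orbitSize_iff, ← Order.succ_eq_add_one (l + 1), Order.Iio_succ_eq_insert,
      injOn_insert self_notMem_Iio]
  have hle := le_orbitSize_iff (f := f) (x := x) (k := l + 1)
  have heq : orbitSize f x = l + 1 ↔ l + 1 ≤ orbitSize f x ∧ ¬ l + 1 + 1 ≤ orbitSize f x := by omega
  rw [heq, hsucc, hle]
  tauto

end Orbit

section Redirect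

variable {α : Type*} [DecidableEq α] {f : α → α} {x : α} {l : ℕ}

theorem iterate_update_of_forall_ne {a : α} (y : α) {j : ℕ} (h : ∀ i < j, f^[i] x ≠ a) :
    (update f a y)^[j] x = f^[j] x := by
  induction j with
  | zero => rfl
  | succ j ih =>
    rw [iterate_succ_apply', ih fun i hi => h i (hi.trans j.lt_succ_self), iterate_succ_apply',
      update_of_ne (h j j.lt_succ_self)]

/-- The map `f` with its value at the `l`-th iterate of `x` replaced by `y`. When the first `l + 1`
iterates of `x` are distinct, they are unchanged and the next one becomes `y`. -/
def redirect (f : α → α) (x : α) (l : ℕ) (y : α) : α → α :=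
  update f (f^[l] x) y

theorem redirect_iterate_succ : redirect f x l (f^[l + 1] x) = f := by
  rw [redirect, iterate_succ_apply', update_eq_self]

theorem iterate_redirect (hinj : InjOn (f^[·] x) (Iio (l + 1))) (y : α) {j : ℕ} (hj : j ≤ l) :
    (redirect f x l y)^[j] x = f^[j] x :=
  iterate_update_of_forall_ne y fun _ hi heq =>
    (hi.trans_le hj).ne (hinj (by simp only [mem_Iio]; omega) (by simp only [mem_Iio]; omega) heq)

theorem eqOn_iterate_redirect (hinj : InjOn (f^[·] x) (Iio (l + 1))) (y : α) :
    EqOn (f^[·] x) ((redirect f x l y)^[·] x) (Iio (l + 1)) :=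
  fun _ hj => (iterate_redirect hinj y (Nat.lt_succ_iff.mp hj)).symm

theorem injOn_iterate_redirect (hinj : InjOn (f^[·] x) (Iio (l + 1))) (y : α) :
    InjOn ((redirect f x l y)^[·] x) (Iio (l + 1)) :=
  hinj.congr (eqOn_iterate_redirect hinj y)

theorem iterate_succ_redirect (hinj : InjOn (f^[·] x) (Iio (l + 1))) (y : α) :
    (redirect f x l y)^[l + 1] x = y := by
  rw [iterate_succ_apply', iterate_redirect hinj y le_rfl, redirect, update_self]

theorem redirect_redirect (hinj : InjOn (f^[·] x) (Iio (l + 1))) (y z : α) :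
    redirect (redirect f x l y) x l z = redirect f x l z := by
  rw [redirect, iterate_redirect hinj y le_rfl, redirect, update_idem, redirect]

theorem redirect_redirect_iterate_succ (hinj : InjOn (f^[·] x) (Iio (l + 1))) (y : α) :
    redirect (redirect f x l y) x l (f^[l + 1] x) = f := by
  rw [redirect_redirect hinj, redirect_iterate_succ]

theorem bijOn_redirect [Finite α] (x : α) (l : ℕ) :
    BijOn (fun p : (α → α) × ℕ => (redirect p.1 x l (p.1^[p.2] x), p.1^[l + 1] x))
      ({f | l + 1 ≤ orbitSize f x} ×ˢ Iio (l + 1))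
      ({f | orbitSize f x = l + 1} ×ˢ univ) := by
  simp only [le_orbitSize_iff, orbitSize_eq_succ_iff]
  refine ⟨?mapsTo, ?injOn, ?surjOn⟩
  case mapsTo =>
    rintro ⟨f, i⟩ ⟨hf, hi⟩
    refine ⟨⟨injOn_iterate_redirect hf _, i, hi, ?_⟩, mem_univ _⟩
    rw [iterate_succ_redirect hf]
    exact (eqOn_iterate_redirect hf _ hi).symm
  case injOn =>
    rintro ⟨f, i⟩ ⟨hf : InjOn (f^[·] x) _, hi⟩ ⟨g, j⟩ ⟨hg : InjOn (g^[·] x) _, hj⟩ heq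
    obtain ⟨hredirect, hnext⟩ :
        redirect f x l (f^[i] x) = redirect g x l (g^[j] x) ∧ f^[l + 1] x = g^[l + 1] x :=
      Prod.mk.inj heq
    have hfg : f = g := by
      rw [← redirect_redirect_iterate_succ hf (f^[i] x), hredirect, hnext,
        redirect_redirect_iterate_succ hg]
    subst hfg
    have hij : f^[i] x = f^[j] x := by
      rw [← iterate_succ_redirect hf (f^[i] x), hredirect, iterate_succ_redirect hf]
    exact Prod.ext rfl (hf hi hj hij)
  case surjOn =>
    rintro ⟨g, y⟩ ⟨⟨hg, i, hi, hreturn⟩, -⟩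
    refine ⟨(redirect g x l y, i), ⟨injOn_iterate_redirect hg y, hi⟩, Prod.ext ?_ ?_⟩
    · calc redirect (redirect g x l y) x l ((redirect g x l y)^[i] x)
        _ = redirect g x l (g^[i] x) := by
          rw [redirect_redirect hg, iterate_redirect hg y (Nat.lt_succ_iff.mp hi)]
        _ = redirect g x l (g^[l + 1] x) := congrArg (redirect g x l) hreturn
        _ = g := redirect_iterate_succ
    · exact iterate_succ_redirect hg y

end Redirect

theorem natCast_mul_prod_range {R : Type*} [CommSemiring R] (g : ℕ → R) (k : ℕ) :
    k * ∏ i ∈ Finset.range k, g i = k * (g 0 * ∏ i ∈ Finset.Icc 1 (k - 1), g i) := by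
  rcases k with _ | m
  · simp only [Nat.cast_zero, zero_mul]
  · exact congrArg _ (Finset.prod_range_eq_mul_Ico g m.succ_pos)

section Count

variable {α : Type*} [Finite α]

theorem ncard_setOf_orbitSize_eq_mul_card (x : α) (k : ℕ) :
    {f : α → α | orbitSize f x = k}.ncard * Nat.card α =
      {f : α → α | k ≤ orbitSize f x}.ncard * k := by
  classical
  rcases k with _ | l
  · have orbitSize_ne_zero (f : α → α) : orbitSize f x ≠ 0 :=
      ncard_ne_zero_of_mem (a := x) ⟨0, rfl⟩
    simp only [orbitSize_ne_zero, ofPred_false, ncard_empty, zero_mul, mul_zero]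
  · rw [← ncard_univ, ← ncard_prod, ← (bijOn_redirect x l).ncard_eq, ncard_prod, ncard_Iio_nat]

theorem ncard_setOf_succ_le_orbitSize_add (x : α) (k : ℕ) :
    {f : α → α | k + 1 ≤ orbitSize f x}.ncard + {f : α → α | orbitSize f x = k}.ncard =
      {f : α → α | k ≤ orbitSize f x}.ncard := by
  have hdisj : Disjoint {f : α → α | k + 1 ≤ orbitSize f x} {f : α → α | orbitSize f x = k} :=
    disjoint_left.mpr fun _ hlt heq => Nat.ne_of_gt hlt heq
  rw [← ncard_union_eq hdisj]
  congr 1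
  ext f
  simp only [mem_union, mem_ofPred_eq]
  omega

theorem ncard_setOf_zero_le_orbitSize (x : α) :
    {f : α → α | 0 ≤ orbitSize f x}.ncard = Nat.card α ^ Nat.card α := by
  simp only [zero_le, ofPred_true, ncard_univ, Nat.card_fun]

theorem ncard_setOf_le_orbitSize (x : α) (k : ℕ) :
    {f : α → α | k ≤ orbitSize f x}.ncard =
      Nat.card α ^ (Nat.card α - k) * (Nat.card α).descFactorial k := by
  have : Nonempty α := ⟨x⟩
  induction k with
  | zero => rw [ncard_setOf_zero_le_orbitSize, Nat.sub_zero, Nat.descFactorial_zero, mul_one]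
  | succ k ih =>
    have hsplit := ncard_setOf_succ_le_orbitSize_add x k
    have heq := ncard_setOf_orbitSize_eq_mul_card x k
    have hrec : {f : α → α | k + 1 ≤ orbitSize f x}.ncard * Nat.card α =
        {f : α → α | k ≤ orbitSize f x}.ncard * (Nat.card α - k) := by
      rw [Nat.mul_sub, ← heq, ← hsplit, ← Nat.sub_mul, Nat.add_sub_cancel]
    refine Nat.eq_of_mul_eq_mul_right (Nat.card_pos (α := α)) ?_
    rw [hrec, ih, Nat.descFactorial_succ]
    rcases lt_or_ge k (Nat.card α) with hk | hk
    · rw [show Nat.card α - k = Nat.card α - (k + 1) + 1 by omega, pow_succ]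
      ring
    · rw [Nat.sub_eq_zero_of_le hk]
      ring

theorem ncard_setOf_le_orbitSize_div (x : α) (k : ℕ) :
    ({f : α → α | k ≤ orbitSize f x}.ncard : ℝ) / (Nat.card α : ℝ) ^ Nat.card α =
      ∏ i ∈ Finset.range k, (1 - (i : ℝ) / Nat.card α) := by
  have : Nonempty α := ⟨x⟩
  have hcard : (Nat.card α : ℝ) ≠ 0 := Nat.cast_ne_zero.mpr Nat.card_pos.ne'
  induction k with
  | zero =>
    rw [ncard_setOf_zero_le_orbitSize, Nat.cast_pow, div_self (pow_ne_zero _ hcard),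
      Finset.prod_range_zero]
  | succ k ih =>
    have hsplit := congrArg (Nat.cast (R := ℝ)) (ncard_setOf_succ_le_orbitSize_add x k)
    have heq := congrArg (Nat.cast (R := ℝ)) (ncard_setOf_orbitSize_eq_mul_card x k)
    push_cast at hsplit heq
    rw [Finset.prod_range_succ, ← ih]
    field_simp
    linear_combination (Nat.card α : ℝ) * hsplit - heq

theorem ncard_setOf_orbitSize_eq (x : α) (k : ℕ) :
    {f : α → α | orbitSize f x = k}.ncard =
      k * Nat.card α ^ (Nat.card α - k) * ∏ i ∈ Finset.Icc 1 (k - 1), (Nat.card α - i) := by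
  have : Nonempty α := ⟨x⟩
  have hprod := natCast_mul_prod_range (fun i => Nat.card α - i) k
  rw [← Nat.descFactorial_eq_prod_range, Nat.cast_id, Nat.sub_zero] at hprod
  refine Nat.eq_of_mul_eq_mul_right (Nat.card_pos (α := α)) ?_
  rw [ncard_setOf_orbitSize_eq_mul_card, ncard_setOf_le_orbitSize]
  linear_combination Nat.card α ^ (Nat.card α - k) * hprod

theorem ncard_setOf_orbitSize_eq_div (x : α) (k : ℕ) :
    ({f : α → α | orbitSize f x = k}.ncard : ℝ) / (Nat.card α : ℝ) ^ Nat.card α =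
      (∏ i ∈ Finset.Icc 1 (k - 1), (1 - (i : ℝ) / Nat.card α)) * (k / Nat.card α) := by
  have : Nonempty α := ⟨x⟩
  have hcard : (Nat.card α : ℝ) ≠ 0 := Nat.cast_ne_zero.mpr Nat.card_pos.ne'
  have heq := congrArg (Nat.cast (R := ℝ)) (ncard_setOf_orbitSize_eq_mul_card x k)
  push_cast at heq
  have hprod := natCast_mul_prod_range (fun i => 1 - (i : ℝ) / Nat.card α) k
  rw [Nat.cast_zero, zero_div, sub_zero, one_mul, ← ncard_setOf_le_orbitSize_div x k] at hprod
  rw [mul_div_assoc', mul_comm _ (k : ℝ), ← hprod]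
  field_simp
  linear_combination heq

end Count

/-- When `k > Nat.card S`, both products vanish through the factor at `i = Nat.card S`. -/
theorem orbit_size_eq_count_general {S : Type*} [Finite S] (x : S) (k : ℕ) :
    {f : S → S | Set.ncard {y : S | ∃ j : ℕ, f^[j] x = y} = k}.ncard
      = k * Nat.card S ^ (Nat.card S - k) * ∏ i ∈ Finset.Icc 1 (k - 1), (Nat.card S - i) ∧
    ({f : S → S | Set.ncard {y : S | ∃ j : ℕ, f^[j] x = y} = k}.ncard : ℝ)
        / (Nat.card S : ℝ) ^ Nat.card S
      = (∏ i ∈ Finset.Icc 1 (k - 1), (1 - (i : ℝ) / Nat.card S)) * (k / Nat.card S) :=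
  ⟨ncard_setOf_orbitSize_eq x k, ncard_setOf_orbitSize_eq_div x k⟩

/-- The number of functions `f : S → S` (with `|S| = n`) under which the orbit of a fixed
point `x` has size exactly `k` is `k · n^{n-k} · ∏_{i=1}^{k-1}(n-i)`; equivalently, the
probability that the orbit of `x` under a uniformly random `f` has size exactly `k`
is `π^k_n · k/n`. -/
theorem orbit_size_eq_count (n k : ℕ) (hn : 1 ≤ n) (hk : 1 ≤ k) (hkn : k ≤ n) (x : Fin n) :
    {f : Fin n → Fin n | Set.ncard {y : Fin n | ∃ j : ℕ, f^[j] x = y} = k}.ncard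
      = k * n^(n-k) * ∏ i ∈ Finset.Icc 1 (k-1), (n - i) ∧
    ({f : Fin n → Fin n | Set.ncard {y : Fin n | ∃ j : ℕ, f^[j] x = y} = k}.ncard : ℝ)
        / (n : ℝ)^n
      = (∏ i ∈ Finset.Icc 1 (k-1), (1 - (i : ℝ)/n)) * (k / n) := by
  simpa only [Nat.card_fin] using orbit_size_eq_count_general x k
end
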